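/- Let d ≥ 2 and m > 2d − 2. The measure μ = |z|^{-1} δ_{Σ*} on ℝ^{2d} is an atomless σ-finite Borel measure, and integration against μ defines a bounded linear functional on the space C_m(ℝ^{2d}) of continuous functions f with finite norm |f|_m = sup_z |f(z)|⟨z⟩^m; namely |∫ f dμ| ≤ C(d,m)|f|_m. -/

import Mathlib

open MeasureTheory Real Set

noncomputable section

abbrev Z (d : ℕ) := EuclideanSpace ℝ (Fin d ⊕ Fin d)

def om {d : ℕ} (z : Z d) : ℝ := ∑ i : Fin d, z (Sum.inl i) * z (Sum.inr i)

def SigmaStar (d : ℕ) : Set (Z d) := {z | om z = 0 ∧ z ≠ 0}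

/-- The measure `μ = |z|⁻¹ δ_{Σ*}`. -/
def muSigma (d : ℕ) : Measure (Z d) :=
  ((μH[(2 * d - 1 : ℝ)] : Measure (Z d)).restrict (SigmaStar d)).withDensity
    (fun z => ENNReal.ofReal ‖z‖⁻¹)

/-!
The zero set of `om` is a cone, and it is a smooth hypersurface away from the origin because the
derivative of `om` at `z = (x, y)` takes the value `‖z‖ ^ 2` at `(y, x)`. By the implicit function
theorem its `(2d - 1)`-dimensional Hausdorff measure is locally finite away from the origin, hence
finite on the shell `1 ≤ ‖z‖ < 2`; by homogeneity the shell of radius `2 ^ k` has `2 ^ (k (2d - 1))`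
times this measure. Summing over shells, the integral of `‖z‖⁻¹ ⟨z⟩ ^ (-m)` is dominated by a series
which behaves like `∑ 2 ^ (k (2d - 2))` as `k → -∞` and like `∑ 2 ^ (k (2d - 2 - m))` as `k → ∞`.
Thus `⟨z⟩ ^ (-m)` is `μ`-integrable; being positive, it witnesses that `μ` is σ-finite.
-/

open Filter Module
open scoped ENNReal Pointwise Topology

section WeightedIntegrability

variable {α E : Type*} [MeasurableSpace α] {μ : Measure α} [NormedAddCommGroup E]

lemma sigmaFinite_of_integrable_of_ae_ne_zero {f : α → E} (hf : Integrable f μ)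
    (hne : ∀ᵐ x ∂μ, f x ≠ 0) : SigmaFinite μ := by
  obtain ⟨t, -, hzero, hσ⟩ := hf.aefinStronglyMeasurable.exists_set_sigmaFinite
  have hnull : μ tᶜ = 0 := by
    rw [← Measure.restrict_eq_zero, ← ae_eq_bot, ← eventually_false_iff_eq_bot]
    filter_upwards [hzero, ae_restrict_of_ae hne] with x h h' using h' h
  rwa [← Measure.restrict_eq_self_of_ae_mem (mem_ae_iff.2 hnull)]

variable {f : α → E} {w : α → ℝ} {A : ℝ}

lemma integrable_of_norm_mul_le (hw : ∀ x, 0 < w x) (hw_int : Integrable w⁻¹ μ)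
    (hf : AEStronglyMeasurable f μ) (hA : ∀ᵐ x ∂μ, ‖f x‖ * w x ≤ A) : Integrable f μ :=
  (hw_int.const_mul A).mono' hf <| hA.mono fun x hx ↦ (le_mul_inv_iff₀ (hw x)).2 hx

lemma norm_integral_le_of_norm_mul_le [NormedSpace ℝ E] (hw : ∀ x, 0 < w x)
    (hw_int : Integrable w⁻¹ μ) (hA : ∀ᵐ x ∂μ, ‖f x‖ * w x ≤ A) :
    ‖∫ x, f x ∂μ‖ ≤ A * ∫ x, (w x)⁻¹ ∂μ := by
  rw [← integral_const_mul]
  exact norm_integral_le_of_norm_le (hw_int.const_mul A) <|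
    hA.mono fun x hx ↦ (le_mul_inv_iff₀ (hw x)).2 hx

end WeightedIntegrability

section LevelSet

variable {E F : Type*} [NormedAddCommGroup E] [NormedSpace ℝ E] [FiniteDimensional ℝ E]
  [MeasurableSpace E] [BorelSpace E] [NormedAddCommGroup F] [NormedSpace ℝ F]

lemma finiteAtFilter_hausdorffMeasure_ker_of_hasStrictFDerivAt [FiniteDimensional ℝ F]
    {f : E → F} {f' : E →L[ℝ] F} {a : E} (hf : HasStrictFDerivAt f f' a) (hf' : f'.range = ⊤) :
    (μH[finrank ℝ f'.ker] : Measure E).FiniteAtFilter (𝓝[f ⁻¹' {f a}] a) := by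
  have : CompleteSpace E := FiniteDimensional.complete ℝ E
  let e := hf.implicitToOpenPartialHomeomorph f f' hf'
  let g : f'.ker → E := hf.implicitFunction f f' hf' (f a)
  obtain ⟨K, t, ht, hK⟩ := (hf.to_implicitFunction hf').exists_lipschitzOnWith
  let u := t ∩ Metric.closedBall 0 1
  have hu : u ∈ 𝓝 (e a).2 := by
    rw [hf.implicitToOpenPartialHomeomorph_self hf']
    exact inter_mem ht (Metric.closedBall_mem_nhds _ one_pos)
  have hchart : ∀ᶠ x in 𝓝 a, (e x).2 ∈ u :=
    (e.continuousAt (hf.mem_implicitToOpenPartialHomeomorph_source hf')).snd hu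
  refine ⟨g '' u, ?_, ?_⟩
  · filter_upwards [self_mem_nhdsWithin, nhdsWithin_le_nhds hchart,
      nhdsWithin_le_nhds (hf.eq_implicitFunction hf')] with x hx hxu hgx
    exact ⟨(e x).2, hxu, by rwa [mem_singleton_iff.1 hx] at hgx⟩
  · refine ((hK.mono inter_subset_left).hausdorffMeasure_image_le (by positivity)).trans_lt ?_
    have hfin : μH[finrank ℝ f'.ker] u < ∞ :=
      (measure_mono inter_subset_right).trans_lt (isCompact_closedBall 0 1).measure_lt_top
    exact ENNReal.mul_lt_top (by simp) hfin

lemma finiteAtFilter_hausdorffMeasure_of_hasStrictFDerivAt_ne_zero {f : E → ℝ} {f' : E →L[ℝ] ℝ}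
    {a : E} (hf : HasStrictFDerivAt f f' a) (hf' : f' ≠ 0) :
    (μH[finrank ℝ E - 1] : Measure E).FiniteAtFilter (𝓝[f ⁻¹' {f a}] a) := by
  have hne : (f' : E →ₗ[ℝ] ℝ) ≠ 0 := ContinuousLinearMap.coe_injective.ne hf'
  have hdim : (finrank ℝ E : ℝ) - 1 = finrank ℝ f'.ker := by
    rw [sub_eq_iff_eq_add]
    exact_mod_cast (Dual.finrank_ker_add_one_of_ne_zero hne).symm
  rw [hdim]
  exact finiteAtFilter_hausdorffMeasure_ker_of_hasStrictFDerivAt hf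
    (LinearMap.range_eq_top.2 (LinearMap.surjective hne))

end LevelSet

section DyadicShell

variable {E : Type*} [NormedAddCommGroup E]

/-- The part of `S` in the dyadic annulus `2 ^ k ≤ ‖z‖ < 2 ^ (k + 1)`. The annuli are half-open, so
that those with `k : ℤ` partition the complement of the origin. -/
def dyadicShell (S : Set E) (k : ℤ) : Set E :=
  S ∩ {z | ‖z‖ ∈ Ico ((2 : ℝ) ^ k) (2 ^ (k + 1))}

lemma diff_zero_subset_iUnion_dyadicShell (S : Set E) : S \ {0} ⊆ ⋃ k, dyadicShell S k := by
  rintro z ⟨hzS, hz⟩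
  obtain ⟨k, hk⟩ := exists_mem_Ico_zpow (norm_pos_iff.2 hz) one_lt_two
  exact mem_iUnion.2 ⟨k, hzS, hk⟩

lemma measure_dyadicShell_lt_top [ProperSpace E] [MeasurableSpace E] {μ : Measure E} {S : Set E}
    (hS : IsClosed S) (hμ : ∀ z ∈ S, z ≠ 0 → μ.FiniteAtFilter (𝓝[S] z)) (k : ℤ) :
    μ (dyadicShell S k) < ∞ := by
  let K := S ∩ (Metric.closedBall 0 (2 ^ (k + 1)) ∩ {z | (2 : ℝ) ^ k ≤ ‖z‖})
  have hK : IsCompact K := ((isCompact_closedBall _ _).inter_right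
    (isClosed_le continuous_const continuous_norm)).inter_left hS
  have hμK : μ K < ∞ := by
    refine hK.measure_lt_top_of_nhdsWithin fun z hz ↦ ?_
    have hz0 : z ≠ 0 := norm_pos_iff.1 ((zpow_pos two_pos k).trans_le hz.2.2)
    exact (hμ z hz.1 hz0).filter_mono (nhdsWithin_mono z inter_subset_left)
  refine (measure_mono ?_).trans_lt hμK
  exact fun z hz ↦ ⟨hz.1, mem_closedBall_zero_iff.2 hz.2.2.le, hz.2.1⟩

variable [NormedSpace ℝ E] {S : Set E}

lemma dyadicShell_eq_smul (hS : ∀ r : ℝ, 0 < r → ∀ z ∈ S, r • z ∈ S) (k : ℤ) :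
    dyadicShell S k = (2 : ℝ) ^ k • dyadicShell S 0 := by
  have hk : (0 : ℝ) < 2 ^ k := by positivity
  ext z
  have hmem : z ∈ S ↔ ((2 : ℝ) ^ k)⁻¹ • z ∈ S :=
    ⟨hS _ (inv_pos.2 hk) z, fun h ↦ by simpa [hk.ne'] using hS _ hk _ h⟩
  have hnorm : ‖((2 : ℝ) ^ k)⁻¹ • z‖ = ‖z‖ / 2 ^ k := by
    rw [norm_smul, norm_inv, norm_of_nonneg hk.le, inv_mul_eq_div]
  rw [mem_smul_set_iff_inv_smul_mem₀ hk.ne']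
  refine and_congr hmem ?_
  rw [mem_ofPred, mem_ofPred, hnorm, mem_Ico, mem_Ico, zpow_zero, one_le_div hk, div_lt_iff₀ hk,
    zpow_add₀ two_ne_zero, zero_add, mul_comm]

variable [MeasurableSpace E] [BorelSpace E] {s : ℝ}

lemma hausdorffMeasure_dyadicShell (hs : 0 ≤ s) (hS : ∀ r : ℝ, 0 < r → ∀ z ∈ S, r • z ∈ S)
    (k : ℤ) :
    μH[s] (dyadicShell S k) = ENNReal.ofReal (((2 : ℝ) ^ k) ^ s) * μH[s] (dyadicShell S 0) := by
  have hk : (0 : ℝ) < 2 ^ k := by positivity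
  rw [dyadicShell_eq_smul hS, Measure.hausdorffMeasure_smul₀ hs hk.ne', ENNReal.smul_def,
    smul_eq_mul, ← ENNReal.ofReal_coe_nnreal, NNReal.coe_rpow, coe_nnnorm, norm_of_nonneg hk.le]

lemma setLIntegral_norm_le_tsum_dyadicShell {φ : ℝ → ℝ≥0∞} (hφ : AntitoneOn φ (Ioi 0))
    (hs : 0 ≤ s) (hS : ∀ r : ℝ, 0 < r → ∀ z ∈ S, r • z ∈ S) :
    ∫⁻ z in S \ {0}, φ ‖z‖ ∂μH[s] ≤
      (∑' k : ℤ, φ (2 ^ k) * ENNReal.ofReal (((2 : ℝ) ^ k) ^ s)) * μH[s] (dyadicShell S 0) := by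
  have hshell (k : ℤ) : ∫⁻ z in dyadicShell S k, φ ‖z‖ ∂μH[s] ≤
      φ (2 ^ k) * ENNReal.ofReal (((2 : ℝ) ^ k) ^ s) * μH[s] (dyadicShell S 0) := by
    have hk : (0 : ℝ) < 2 ^ k := by positivity
    rw [mul_assoc, ← hausdorffMeasure_dyadicShell hs hS, ← setLIntegral_const]
    exact setLIntegral_mono measurable_const fun z hz ↦ hφ hk (hk.trans_le hz.2.1) hz.2.1
  calc ∫⁻ z in S \ {0}, φ ‖z‖ ∂μH[s]
      ≤ ∑' k, ∫⁻ z in dyadicShell S k, φ ‖z‖ ∂μH[s] :=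
        (lintegral_mono_set (diff_zero_subset_iUnion_dyadicShell S)).trans (lintegral_iUnion_le _ _)
    _ ≤ ∑' k : ℤ, φ (2 ^ k) * ENNReal.ofReal (((2 : ℝ) ^ k) ^ s) * μH[s] (dyadicShell S 0) :=
        ENNReal.tsum_le_tsum hshell
    _ = _ := ENNReal.tsum_mul_right

end DyadicShell

section JapaneseBracket

variable {m t : ℝ}

lemma one_le_sqrt_sq_add_one (r : ℝ) : 1 ≤ √(r ^ 2 + 1) :=
  one_le_sqrt.2 (le_add_of_nonneg_left (sq_nonneg r))

lemma antitoneOn_sqrt_sq_add_one_rpow_neg (hm : 0 ≤ m) :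
    AntitoneOn (fun r : ℝ ↦ √(r ^ 2 + 1) ^ (-m)) (Ici 0) := by
  intro a (ha : 0 ≤ a) b _ hab
  exact rpow_le_rpow_of_nonpos (by positivity) (by gcongr) (neg_nonpos.2 hm)

lemma summable_zpow_rpow_mul_sqrt_sq_add_one_rpow_neg {b : ℝ} (hb : 1 < b) (ht : 0 < t)
    (htm : t < m) :
    Summable fun k : ℤ ↦ (b ^ k) ^ t * √((b ^ k) ^ 2 + 1) ^ (-m) := by
  have hb₀ : 0 < b := one_pos.trans hb
  have hgeom {q : ℝ} (hq : q < 0) : Summable fun n : ℕ ↦ (b ^ q) ^ n :=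
    summable_geometric_of_lt_one (by positivity) (rpow_lt_one_of_one_lt_of_neg hb hq)
  refine .of_nat_of_neg (.of_nonneg_of_le (fun n ↦ by positivity) (fun n ↦ ?_)
    (hgeom (sub_neg.2 htm))) (.of_nonneg_of_le (fun n ↦ by positivity) (fun n ↦ ?_)
    (hgeom (neg_neg_iff_pos.2 ht)))
  · have hn : 0 < b ^ n := by positivity
    have hle : √((b ^ n) ^ 2 + 1) ^ (-m) ≤ (b ^ n) ^ (-m) :=
      rpow_le_rpow_of_nonpos hn (le_sqrt_of_sq_le (by linarith)) (by linarith)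
    calc (b ^ (n : ℤ)) ^ t * √((b ^ (n : ℤ)) ^ 2 + 1) ^ (-m)
        ≤ (b ^ n) ^ t * (b ^ n) ^ (-m) := by rw [zpow_natCast]; gcongr
      _ = (b ^ (t - m)) ^ n := by rw [← rpow_add hn, ← sub_eq_add_neg, rpow_pow_comm hb₀.le]
  · calc (b ^ (-n : ℤ)) ^ t * √((b ^ (-n : ℤ)) ^ 2 + 1) ^ (-m)
        ≤ (b ^ (-n : ℤ)) ^ t := mul_le_of_le_one_right (by positivity)
          (rpow_le_one_of_one_le_of_nonpos (one_le_sqrt_sq_add_one _) (by linarith))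
      _ = (b ^ (-t)) ^ n := by
          rw [zpow_neg, zpow_natCast, inv_rpow (by positivity), ← rpow_neg (by positivity),
            rpow_pow_comm hb₀.le]

variable {E : Type*} [NormedAddCommGroup E] [NormedSpace ℝ E] [MeasurableSpace E] [BorelSpace E]
  {S : Set E} {s p : ℝ}

lemma setLIntegral_norm_rpow_neg_mul_sqrt_rpow_neg_lt_top (hp : 0 ≤ p) (hps : p < s)
    (hsm : s < p + m) (hS : ∀ r : ℝ, 0 < r → ∀ z ∈ S, r • z ∈ S)
    (hfin : μH[s] (dyadicShell S 0) < ∞) :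
    ∫⁻ z in S \ {0}, ENNReal.ofReal (‖z‖ ^ (-p) * √(‖z‖ ^ 2 + 1) ^ (-m)) ∂μH[s] < ∞ := by
  let φ : ℝ → ℝ≥0∞ := fun r ↦ ENNReal.ofReal (r ^ (-p) * √(r ^ 2 + 1) ^ (-m))
  have hφ : AntitoneOn φ (Ioi 0) := by
    intro a (ha : 0 < a) b (hb : 0 < b) hab
    have hbracket := antitoneOn_sqrt_sq_add_one_rpow_neg (by linarith : 0 ≤ m) ha.le hb.le hab
    exact ENNReal.ofReal_le_ofReal <| mul_le_mul
      (rpow_le_rpow_of_nonpos ha hab (neg_nonpos.2 hp)) hbracket (by positivity) (by positivity)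
  have hterm (k : ℤ) : φ (2 ^ k) * ENNReal.ofReal (((2 : ℝ) ^ k) ^ s) =
      ENNReal.ofReal (((2 : ℝ) ^ k) ^ (s - p) * √(((2 : ℝ) ^ k) ^ 2 + 1) ^ (-m)) := by
    rw [← ENNReal.ofReal_mul (by positivity), sub_eq_add_neg, rpow_add (by positivity)]
    ring_nf
  refine (setLIntegral_norm_le_tsum_dyadicShell hφ (hp.trans hps.le) hS).trans_lt
    (ENNReal.mul_lt_top ?_ hfin)
  simp_rw [hterm]
  exact (summable_zpow_rpow_mul_sqrt_sq_add_one_rpow_neg one_lt_two (sub_pos.2 hps)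
    (by linarith)).tsum_ofReal_lt_top

end JapaneseBracket

section Quadric

variable {d : ℕ} {m : ℝ}

lemma om_smul (r : ℝ) (z : Z d) : om (r • z) = r ^ 2 * om z := by
  simp only [om, PiLp.smul_apply, smul_eq_mul, Finset.mul_sum]
  exact Finset.sum_congr rfl fun i _ ↦ by ring

/-- The derivative of `om` at `z = (x, y)`, namely `(x', y') ↦ x · y' + y · x'`. -/
def omDeriv (z : Z d) : Z d →L[ℝ] ℝ :=
  ∑ i, (z (.inl i) • EuclideanSpace.proj (.inr i) + z (.inr i) • EuclideanSpace.proj (.inl i))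

lemma hasStrictFDerivAt_om (z : Z d) : HasStrictFDerivAt om (omDeriv z) z := by
  exact .fun_sum fun i _ ↦ (PiLp.hasStrictFDerivAt_apply 2 z (.inl i)).mul
    (PiLp.hasStrictFDerivAt_apply 2 z (.inr i))

lemma omDeriv_swap (z : Z d) : omDeriv z (WithLp.toLp 2 fun a ↦ z a.swap) = ‖z‖ ^ 2 := by
  rw [EuclideanSpace.real_norm_sq_eq, Fintype.sum_sum_type]
  simp [omDeriv, Finset.sum_add_distrib, sq]

lemma omDeriv_ne_zero {z : Z d} (hz : z ≠ 0) : omDeriv z ≠ 0 := by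
  intro h
  have hnorm := omDeriv_swap z
  rw [h, zero_apply] at hnorm
  exact hz (norm_eq_zero.1 (sq_eq_zero_iff.1 hnorm.symm))

lemma hausdorffMeasure_dyadicShell_om_lt_top (d : ℕ) (k : ℤ) :
    μH[2 * d - 1] (dyadicShell (om ⁻¹' {0} : Set (Z d)) k) < ∞ := by
  have hcont : Continuous (om : Z d → ℝ) :=
    continuous_iff_continuousAt.2 fun z ↦ (hasStrictFDerivAt_om z).continuousAt
  have hdim : (finrank ℝ (Z d) : ℝ) - 1 = 2 * d - 1 := by simp [two_mul]
  refine measure_dyadicShell_lt_top (isClosed_singleton.preimage hcont) (fun z hz hz₀ ↦ ?_) k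
  have hfin := finiteAtFilter_hausdorffMeasure_of_hasStrictFDerivAt_ne_zero
    (hasStrictFDerivAt_om z) (omDeriv_ne_zero hz₀)
  rwa [hdim, mem_singleton_iff.1 hz] at hfin

lemma integrable_sqrt_rpow_neg_muSigma (hd : 2 ≤ d) (hm : 2 * d - 2 < m) :
    Integrable (fun z : Z d ↦ √(‖z‖ ^ 2 + 1) ^ (-m)) (muSigma d) := by
  have hd' : (2 : ℝ) ≤ d := by exact_mod_cast hd
  have hcone (r : ℝ) (_ : 0 < r) (z : Z d) (hz : z ∈ om ⁻¹' {0}) : r • z ∈ om ⁻¹' {0} := by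
    rw [mem_preimage, mem_singleton_iff] at hz ⊢
    rw [om_smul, hz, mul_zero]
  have hfin := setLIntegral_norm_rpow_neg_mul_sqrt_rpow_neg_lt_top zero_le_one
    (by linarith : (1 : ℝ) < 2 * d - 1) (by linarith : (2 * d - 1 : ℝ) < 1 + m) hcone
    (hausdorffMeasure_dyadicShell_om_lt_top d 0)
  have hmeas : Measurable fun z : Z d ↦ √(‖z‖ ^ 2 + 1) ^ (-m) := by fun_prop
  refine ⟨hmeas.aestronglyMeasurable, ?_⟩
  rw [hasFiniteIntegral_iff_ofReal (.of_forall fun z ↦ by positivity), muSigma,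
    lintegral_withDensity_eq_lintegral_mul _ (by fun_prop) (by fun_prop)]
  refine (lintegral_congr fun z ↦ ?_).trans_lt hfin
  rw [Pi.mul_apply, ← ENNReal.ofReal_mul (by positivity), rpow_neg_one]

lemma muSigma_singleton (hd : 1 ≤ d) (z : Z d) : muSigma d {z} = 0 := by
  have hd' : (1 : ℝ) ≤ d := by exact_mod_cast hd
  have := Measure.nullSingletonClass_hausdorff (Z d) (d := 2 * d - 1) (by linarith)
  exact withDensity_absolutelyContinuous _ _ (measure_singleton z)

end Quadric

theorem muSigma_functional_general {E : Type*} [NormedAddCommGroup E] [NormedSpace ℝ E]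
    [CompleteSpace E] (d : ℕ) (hd : 2 ≤ d) (m : ℝ) (hm : 2 * d - 2 < m) :
    (∀ z : Z d, muSigma d {z} = 0) ∧ SigmaFinite (muSigma d) ∧
    ∃ C > (0 : ℝ), ∀ f : Z d → E, ∀ A : ℝ, 0 ≤ A → AEStronglyMeasurable f (muSigma d) →
      (∀ᵐ z ∂muSigma d, ‖f z‖ * √(‖z‖ ^ 2 + 1) ^ m ≤ A) →
      Integrable f (muSigma d) ∧ ‖∫ z, f z ∂muSigma d‖ ≤ C * A := by
  let w : Z d → ℝ := fun z ↦ √(‖z‖ ^ 2 + 1) ^ m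
  have hw (z : Z d) : 0 < w z := by positivity
  have hw_int : Integrable w⁻¹ (muSigma d) :=
    (integrable_sqrt_rpow_neg_muSigma hd hm).congr (.of_forall fun z ↦ rpow_neg (sqrt_nonneg _) m)
  have hC : 0 ≤ ∫ z, (w z)⁻¹ ∂muSigma d := integral_nonneg fun z ↦ (inv_pos.2 (hw z)).le
  refine ⟨muSigma_singleton (one_le_two.trans hd), sigmaFinite_of_integrable_of_ae_ne_zero hw_int
    (.of_forall fun z ↦ (inv_pos.2 (hw z)).ne'), (∫ z, (w z)⁻¹ ∂muSigma d) + 1,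
    add_pos_of_nonneg_of_pos hC one_pos,
    fun f A hA hf hfA ↦ ⟨integrable_of_norm_mul_le hw hw_int hf hfA, ?_⟩⟩
  calc ‖∫ z, f z ∂muSigma d‖ ≤ A * ∫ z, (w z)⁻¹ ∂muSigma d :=
        norm_integral_le_of_norm_mul_le hw hw_int hfA
    _ ≤ ((∫ z, (w z)⁻¹ ∂muSigma d) + 1) * A := by linarith

/-- for `d ≥ 2` and `m > 2d − 2`, the measure `μ = |z|⁻¹ δ_{Σ*}` is an atomless
σ-finite Borel measure, and `f ↦ ∫ f dμ` is a bounded linear functional on `C_m(ℝ^{2d})`: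
every continuous `f` with `|f(z)|⟨z⟩^m ≤ A` is `μ`-integrable with `|∫ f dμ| ≤ C A`. -/
theorem muSigma_functional (d : ℕ) (hd : 2 ≤ d) (m : ℝ) (hm : 2 * d - 2 < m) :
    (∀ z : Z d, muSigma d {z} = 0) ∧ SigmaFinite (muSigma d) ∧
    ∃ C > (0:ℝ), ∀ f : Z d → ℝ, ∀ A : ℝ, Continuous f →
      (∀ z, |f z| * (Real.sqrt (‖z‖ ^ 2 + 1)) ^ m ≤ A) →
      Integrable f (muSigma d) ∧ |∫ z, f z ∂(muSigma d)| ≤ C * A := by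
  obtain ⟨hatom, hσ, C, hC, hbound⟩ := muSigma_functional_general (E := ℝ) d hd m hm
  exact ⟨hatom, hσ, C, hC, fun f A hf hA ↦ hbound f A ((by positivity : (0 : ℝ) ≤ _).trans (hA 0))
    hf.aestronglyMeasurable (.of_forall hA)⟩
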